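/- Let χ be a quadratic Dirichlet character modulo q induced by the primitive character χ* of conductor q₀. For x ∈ ℤ set r = gcd(q, x). If q/q₀ is square-free, gcd(q/q₀, q₀) = 1 and r ∣ q/q₀, then Σ_{a ∈ A_q} G(χ, a) e^{2πi x a/q} = μ(r) q₀ (φ(r)/φ(q)) χ*(−x); otherwise Σ_{a ∈ A_q} G(χ, a) e^{2πi x a/q} = 0. -/

import Mathlib

open scoped BigOperators

/-- `A_q = {1 ≤ a ≤ q : gcd(a, q) = 1}`. -/
def Aq (q : ℕ) : Finset ℕ := (Finset.Icc 1 q).filter (fun a => Nat.Coprime a q)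

/-- The normalized Gauss sum `G(χ, n) = (1/φ(q)) Σ_{r ∈ A_q} χ(r) e^{2πi r n/q}`. -/
noncomputable def gaussG (q : ℕ) (χ : DirichletCharacter ℂ q) (n : ℤ) : ℂ :=
  ((q.totient : ℂ))⁻¹ *
    ∑ r ∈ Aq q, χ (r : ZMod q) * Complex.exp (2 * Real.pi * Complex.I * r * n / q)


noncomputable def eN (N : ℕ) (n : ℤ) : ℂ := Complex.exp (2 * Real.pi * Complex.I * n / N)

lemma eN_add (N : ℕ) (a b : ℤ) : eN N (a + b) = eN N a * eN N b := by
  unfold eN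
  rw [← Complex.exp_add]
  congr 1
  push_cast
  ring

lemma eN_scale (d N : ℕ) (hd : d ≠ 0) (n : ℤ) : eN (d * N) (d * n) = eN N n := by
  unfold eN
  congr 1
  have : (d : ℂ) ≠ 0 := by exact_mod_cast hd
  by_cases hN : (N : ℂ) = 0
  · simp [hN]
  push_cast
  field_simp

lemma eN_self (N : ℕ) (hN : N ≠ 0) (n : ℤ) : eN N (N * n) = 1 := by
  unfold eN
  rw [Complex.exp_eq_one_iff]
  refine ⟨n, ?_⟩
  have : (N : ℂ) ≠ 0 := by exact_mod_cast hN
  push_cast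
  field_simp

lemma eN_eq_one (N : ℕ) (hN : N ≠ 0) (n : ℤ) : eN N n = 1 ↔ (N : ℤ) ∣ n := by
  constructor
  · intro h
    unfold eN at h
    rw [Complex.exp_eq_one_iff] at h
    obtain ⟨k, hk⟩ := h
    refine ⟨k, ?_⟩
    have h1 : (N : ℂ) ≠ 0 := by exact_mod_cast hN
    have h2 : (2 * Real.pi * Complex.I : ℂ) ≠ 0 := Complex.two_pi_I_ne_zero
    have h3 : (2 * Real.pi * Complex.I : ℂ) * n = (2 * Real.pi * Complex.I : ℂ) * (N * k) := by
      rw [div_eq_iff h1] at hk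
      rw [hk]; ring
    have := mul_left_cancel₀ h2 h3
    exact_mod_cast this
  · rintro ⟨k, rfl⟩
    exact eN_self N hN k

lemma eN_nat_mul (N : ℕ) (j : ℕ) (x : ℤ) : eN N (j * x) = eN N x ^ j := by
  unfold eN
  rw [← Complex.exp_nat_mul]
  congr 1
  push_cast
  ring

lemma eN_geom (k : ℕ) (hk : k ≠ 0) (x : ℤ) :
    ∑ j ∈ Finset.range k, eN k (j * x) = if (k : ℤ) ∣ x then (k : ℂ) else 0 := by
  simp_rw [eN_nat_mul]
  split_ifs with h
  · rw [(eN_eq_one k hk x).2 h]; simp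
  · have h1 : eN k x ≠ 1 := fun h' => h ((eN_eq_one k hk x).1 h')
    rw [geom_sum_eq h1, ← eN_nat_mul, eN_self k hk]; simp

lemma sum_split (m k : ℕ) (F : ℕ → ℂ) :
    ∑ b ∈ Finset.range (m * k), F b
      = ∑ j ∈ Finset.range k, ∑ c ∈ Finset.range m, F (c + m * j) := by
  induction k with
  | zero => simp
  | succ k ih =>
    rw [Nat.mul_succ, Finset.sum_range_add, ih, Finset.sum_range_succ]
    simp_rw [add_comm]

lemma sum_dvd (d n : ℕ) (hd : d ≠ 0) (F : ℕ → ℂ) :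
    ∑ b ∈ Finset.range (d * n), (if d ∣ b then F b else 0)
      = ∑ c ∈ Finset.range n, F (d * c) := by
  rw [sum_split]
  refine Finset.sum_congr rfl fun j _ => ?_
  rw [Finset.sum_eq_single 0]
  · simp
  · intro b hb hb0
    rw [if_neg]
    intro h
    rw [Nat.dvd_add_left (dvd_mul_right d j)] at h
    exact absurd (Nat.le_of_dvd (Nat.pos_of_ne_zero hb0) h) (by simpa using hb)
  · simp [hd]

/-- the Gauss sum of a primitive character -/
noncomputable def tau (N : ℕ) (χ : DirichletCharacter ℂ N) (y : ℤ) : ℂ :=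
  ∑ b ∈ Finset.range N, χ (b : ZMod N) * eN N (b * y)

lemma tau_eq (N : ℕ) [NeZero N] (χ : DirichletCharacter ℂ N) (y : ℤ) :
    tau N χ y = gaussSum χ ((ZMod.stdAddChar (N := N)).mulShift (y : ZMod N)) := by
  unfold tau gaussSum
  symm
  refine Finset.sum_bij' (fun a _ => a.val) (fun b _ => (b : ZMod N)) ?_ ?_ ?_ ?_ ?_
  · intro a _; simpa using ZMod.val_lt a
  · simp
  · simp
  · intro b hb; simpa using ZMod.val_cast_of_lt (by simpa using hb)
  · intro a _
    have h : (y : ZMod N) * a = (((a.val : ℤ) * y : ℤ) : ZMod N) := by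
      push_cast; simp [mul_comm]
    rw [AddChar.mulShift_apply, h, ZMod.stdAddChar_coe]
    simp [eN]

lemma tau_prim (N : ℕ) [NeZero N] (χ : DirichletCharacter ℂ N) (hp : χ.IsPrimitive)
    (hinv : χ⁻¹ = χ) (y : ℤ) : tau N χ y = χ (y : ZMod N) * tau N χ 1 := by
  rw [tau_eq, tau_eq, gaussSum_mulShift_of_isPrimitive _ hp, hinv]
  simp

lemma tau_sq (N : ℕ) [NeZero N] (χ : DirichletCharacter ℂ N) (hp : χ.IsPrimitive)
    (hinv : χ⁻¹ = χ) : tau N χ 1 * tau N χ 1 = N * χ (-1) := by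
  have h1 : tau N χ 1 = gaussSum χ (ZMod.stdAddChar (N := N)) := by
    rw [tau_eq]; simp
  rw [h1]
  set ψ := ZMod.stdAddChar (N := N) with hψ
  have h2 : gaussSum χ ψ * gaussSum χ ψ
      = ∑ y : ZMod N, gaussSum χ (ψ.mulShift y) * ψ y := by
    simp_rw [gaussSum_mulShift_of_isPrimitive ψ hp, hinv]
    nth_rw 1 [gaussSum]
    rw [Finset.sum_mul]
    exact Finset.sum_congr rfl fun y _ => by ring
  rw [h2]
  simp_rw [gaussSum, Finset.sum_mul]
  rw [Finset.sum_comm]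
  have h3 : ∀ b : ZMod N, ∑ y : ZMod N, χ b * (ψ.mulShift y) b * ψ y
      = χ b * (if b + 1 = 0 then (N : ℂ) else 0) := by
    intro b
    have := AddChar.sum_mulShift (b + 1) (ZMod.isPrimitive_stdAddChar N)
    rw [ZMod.card] at this
    push_cast at this
    rw [← this, Finset.mul_sum]
    refine Finset.sum_congr rfl fun y _ => ?_
    rw [AddChar.mulShift_apply, mul_assoc, ← AddChar.map_add_eq_mul, mul_add, mul_one]
  simp_rw [h3, add_eq_zero_iff_eq_neg]
  simp [mul_comm]

lemma big_sum (N k : ℕ) [NeZero N] (hk : k ≠ 0) (χ : DirichletCharacter ℂ N) (x : ℤ) :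
    ∑ b ∈ Finset.range (N * k), χ (b : ZMod N) * eN (N * k) (b * x)
      = if (k : ℤ) ∣ x then k * tau N χ (x / k) else 0 := by
  have hN : N ≠ 0 := NeZero.ne N
  rw [sum_split]
  have h : ∀ j c : ℕ, χ ((c + N * j : ℕ) : ZMod N) * eN (N * k) ((c + N * j : ℕ) * x)
      = χ (c : ZMod N) * eN (N * k) (c * x) * eN k (j * x) := by
    intro j c
    have : (((c + N * j : ℕ) : ℤ) * x) = c * x + N * (j * x) := by push_cast; ring
    rw [this, eN_add, eN_scale _ _ hN]
    push_cast; simp [mul_assoc]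
  simp_rw [h, ← Finset.sum_mul, ← Finset.mul_sum]
  rw [eN_geom k hk]
  split_ifs with hkx
  · obtain ⟨y, rfl⟩ := hkx
    rw [Int.mul_ediv_cancel_left _ (by exact_mod_cast hk), mul_comm, tau]
    congr 1
    refine Finset.sum_congr rfl fun b _ => ?_
    rw [mul_comm N k, ← eN_scale k N hk (b * y)]
    congr 2; ring
  · simp

lemma coprime_ind (b m : ℕ) (hm : m ≠ 0) :
    (if Nat.Coprime b m then (1 : ℂ) else 0)
      = ∑ d ∈ m.divisors, if d ∣ b then ((ArithmeticFunction.moebius d : ℤ) : ℂ) else 0 := by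
  have hg : b.gcd m ≠ 0 := Nat.gcd_ne_zero_right hm
  have h := congrArg (fun f => f (b.gcd m))
    (ArithmeticFunction.coe_moebius_mul_coe_zeta (R := ℂ))
  simp only [ArithmeticFunction.mul_apply, ArithmeticFunction.one_apply] at h
  have e : (if Nat.Coprime b m then (1 : ℂ) else 0) = if b.gcd m = 1 then 1 else 0 := by
    simp only [Nat.coprime_iff_gcd_eq_one]
  rw [e, ← h, Nat.sum_divisorsAntidiagonal
    (fun d e => ((ArithmeticFunction.moebius : ArithmeticFunction ℂ) d)
      * ((ArithmeticFunction.zeta : ArithmeticFunction ℂ) e)), ← Finset.sum_filter]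
  have hs : m.divisors.filter (fun d => d ∣ b) = (b.gcd m).divisors := by
    ext d; simp [Nat.dvd_gcd_iff, hm, and_comm]
  rw [hs]
  refine Finset.sum_congr rfl fun d hd => ?_
  have hd' := Nat.dvd_of_mem_divisors hd
  have : (b.gcd m) / d ≠ 0 := Nat.div_ne_zero_iff_of_dvd hd' |>.2
    ⟨hg, fun h0 => hg (by simpa [h0] using hd')⟩
  simp only [ArithmeticFunction.intCoe_apply, ArithmeticFunction.natCoe_apply,
    ArithmeticFunction.zeta_apply, if_neg this]
  simp

lemma totient_sum (g : ℕ) (hg : g ≠ 0) :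
    ∑ k ∈ g.divisors, (k : ℂ) * ((ArithmeticFunction.moebius (g / k) : ℤ) : ℂ) = g.totient := by
  have h := (ArithmeticFunction.sum_eq_iff_sum_mul_moebius_eq (R := ℂ)
    (f := fun n => (n.totient : ℂ)) (g := fun n => (n : ℂ))).1 (by
      intro n _; exact_mod_cast Nat.sum_totient n) g (Nat.pos_of_ne_zero hg)
  rw [← h, Nat.sum_divisorsAntidiagonal' (fun d e =>
    ((ArithmeticFunction.moebius d : ℤ) : ℂ) * (e : ℂ))]
  exact Finset.sum_congr rfl fun k _ => mul_comm _ _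

lemma Aq_sum (q : ℕ) (hq : q ≠ 0) (χ : DirichletCharacter ℂ q) (x : ℤ) :
    ∑ r ∈ Aq q, χ (r : ZMod q) * eN q (r * x)
      = ∑ b ∈ Finset.range q, χ (b : ZMod q) * eN q (b * x) := by
  have h1 : ∑ r ∈ Aq q, χ (r : ZMod q) * eN q (r * x)
      = ∑ r ∈ Finset.Icc 1 q, χ (r : ZMod q) * eN q (r * x) := by
    unfold Aq
    refine Finset.sum_filter_of_ne fun r _ hne => ?_
    by_contra hc
    apply hne
    rw [MulChar.map_nonunit _ (by rwa [ZMod.isUnit_iff_coprime]), zero_mul]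
  rw [h1]
  have h2 := Finset.sum_range_succ (fun b : ℕ => χ (b : ZMod q) * eN q (b * x)) q
  rw [Finset.range_eq_Ico, Finset.sum_eq_sum_Ico_succ_bot (Nat.succ_pos q)] at h2
  have h3 : χ ((q : ℕ) : ZMod q) * eN q ((q : ℕ) * x)
      = χ ((0 : ℕ) : ZMod q) * eN q ((0 : ℕ) * x) := by
    rw [eN_self q hq]
    simp [eN]
  rw [h3, add_comm, add_right_cancel_iff] at h2
  rw [← h2]
  rfl

lemma chi_ind (N m : ℕ) (hN : N ≠ 0) (hm : m ≠ 0) (hd : N ∣ N * m) (χs : DirichletCharacter ℂ N)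
    (b : ℕ) :
    (DirichletCharacter.changeLevel hd χs) (b : ZMod (N * m))
      = ∑ d ∈ m.divisors, if d ∣ b then
          ((ArithmeticFunction.moebius d : ℤ) : ℂ) * χs (b : ZMod N) else 0 := by
  have h0 := coprime_ind b m hm
  have h1 : ∑ d ∈ m.divisors, (if d ∣ b then
          ((ArithmeticFunction.moebius d : ℤ) : ℂ) * χs (b : ZMod N) else 0)
      = (if Nat.Coprime b m then (1 : ℂ) else 0) * χs (b : ZMod N) := by
    rw [h0, Finset.sum_mul]
    exact Finset.sum_congr rfl fun d _ => by split_ifs <;> simp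
  rw [h1]
  by_cases hc : Nat.Coprime b (N * m)
  · have hc2 := Nat.coprime_mul_iff_right.1 hc
    have := DirichletCharacter.changeLevel_eq_cast_of_dvd' χs hd (a := (b : ℤ))
      (by exact_mod_cast Nat.isCoprime_iff_coprime.2 hc)
    rw [if_pos hc2.2, one_mul]
    exact_mod_cast this
  · rw [MulChar.map_nonunit _ (by rwa [ZMod.isUnit_iff_coprime])]
    rw [Nat.coprime_mul_iff_right, not_and_or] at hc
    rcases hc with hc | hc
    · rw [MulChar.map_nonunit χs (by rwa [ZMod.isUnit_iff_coprime]), mul_zero]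
    · rw [if_neg hc, zero_mul]

lemma main_formula (N m : ℕ) (hN : N ≠ 0) (hm : m ≠ 0) (hd : N ∣ N * m)
    (χs : DirichletCharacter ℂ N) (hp : χs.IsPrimitive) (hinv : χs⁻¹ = χs) (x : ℤ) :
    ∑ r ∈ Aq (N * m), (DirichletCharacter.changeLevel hd χs) (r : ZMod (N * m))
        * eN (N * m) (r * x)
      = tau N χs 1 * ∑ k ∈ m.divisors, if (k : ℤ) ∣ x then
          (k : ℂ) * ((ArithmeticFunction.moebius (m / k) : ℤ) : ℂ) * χs ((m / k : ℕ) : ZMod N)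
            * χs ((x / k : ℤ) : ZMod N) else 0 := by
  have : NeZero N := ⟨hN⟩
  rw [Aq_sum _ (mul_ne_zero hN hm)]
  simp_rw [chi_ind N m hN hm hd χs, Finset.sum_mul]
  rw [Finset.sum_comm, ← Nat.sum_div_divisors, Finset.mul_sum]
  refine Finset.sum_congr rfl fun k hk => ?_
  obtain ⟨d, rfl⟩ := Nat.dvd_of_mem_divisors hk
  have hk0 : k ≠ 0 := left_ne_zero_of_mul hm
  have hd0 : d ≠ 0 := right_ne_zero_of_mul hm
  rw [Nat.mul_div_cancel_left _ (Nat.pos_of_ne_zero hk0)]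
  have e1 : N * (k * d) = d * (N * k) := by ring
  simp_rw [ite_mul, zero_mul]
  rw [e1, sum_dvd d (N * k) hd0 (fun b => ((ArithmeticFunction.moebius d : ℤ) : ℂ)
    * χs (b : ZMod N) * eN (d * (N * k)) (b * x))]
  have e2 : ∀ c : ℕ, ((ArithmeticFunction.moebius d : ℤ) : ℂ)
      * χs ((d * c : ℕ) : ZMod N) * eN (d * (N * k)) ((d * c : ℕ) * x)
      = ((ArithmeticFunction.moebius d : ℤ) : ℂ) * χs (d : ZMod N)
        * (χs (c : ZMod N) * eN (N * k) (c * x)) := by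
    intro c
    have : ((d * c : ℕ) : ℤ) * x = d * (c * x) := by push_cast; ring
    rw [this, eN_scale _ _ hd0]
    push_cast
    rw [map_mul]; ring
  simp_rw [e2, ← Finset.mul_sum]
  rw [big_sum N k hk0]
  split_ifs with h
  · rw [tau_prim N χs hp hinv]; ring
  · simp

lemma formula_coprime (N m : ℕ) (hN : N ≠ 0) (hm : m ≠ 0) (hd : N ∣ N * m)
    (χs : DirichletCharacter ℂ N) (hp : χs.IsPrimitive) (hinv : χs⁻¹ = χs) (x : ℤ)
    (hx : IsCoprime (m : ℤ) x) :
    ∑ r ∈ Aq (N * m), (DirichletCharacter.changeLevel hd χs) (r : ZMod (N * m))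
        * eN (N * m) (r * x)
      = tau N χs 1 * (((ArithmeticFunction.moebius m : ℤ) : ℂ) * χs (m : ZMod N)
            * χs (x : ZMod N)) := by
  rw [main_formula N m hN hm hd χs hp hinv]
  congr 1
  rw [Finset.sum_eq_single 1]
  · simp
  · intro k hk hk1
    rw [if_neg]
    intro h
    apply hk1
    have h1 : (k : ℤ) ∣ m := by exact_mod_cast Nat.dvd_of_mem_divisors hk
    have := Int.isUnit_iff_natAbs_eq.1 (hx.isUnit_of_dvd' h1 h)
    simpa using this
  · simp [hm]

lemma formula_squarefree (N m : ℕ) (hN : N ≠ 0) (hm : m ≠ 0) (hd : N ∣ N * m)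
    (χs : DirichletCharacter ℂ N) (hp : χs.IsPrimitive) (hinv : χs⁻¹ = χs) (x : ℤ)
    (hsq : Squarefree m) (hco : Nat.Coprime m N) (g : ℕ) (hg : g = Int.gcd m x) :
    ∑ r ∈ Aq (N * m), (DirichletCharacter.changeLevel hd χs) (r : ZMod (N * m))
        * eN (N * m) (r * x)
      = tau N χs 1 * (χs (m : ZMod N) * χs (x : ZMod N)
          * (((ArithmeticFunction.moebius (m / g) : ℤ) : ℂ) * g.totient)) := by
  rw [main_formula N m hN hm hd χs hp hinv]
  congr 1
  have hgm : g ∣ m := by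
    have := Int.gcd_dvd_left (a := (m : ℤ)) (b := x)
    rw [← hg] at this; exact_mod_cast this
  have hg0 : g ≠ 0 := fun h => hm (by simpa [h] using hgm)
  rw [← totient_sum g hg0, Finset.mul_sum, Finset.mul_sum, ← Finset.sum_filter]
  have hs : m.divisors.filter (fun k : ℕ => (k : ℤ) ∣ x) = g.divisors := by
    ext k
    simp only [Finset.mem_filter, Nat.mem_divisors, hg, ne_eq]
    rw [← Int.natCast_dvd_natCast (m := k) (n := Int.gcd _ _), Int.dvd_coe_gcd_iff]
    rw [Int.natCast_dvd_natCast, ← hg]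
    tauto
  rw [hs]
  refine Finset.sum_congr rfl fun k hk => ?_
  obtain ⟨l, rfl⟩ := Nat.dvd_of_mem_divisors hk
  obtain ⟨t, rfl⟩ := hgm
  have hkx : (k : ℤ) ∣ x := by
    have h1 := Int.gcd_dvd_right (a := ((k * l * t : ℕ) : ℤ)) (b := x)
    rw [← hg] at h1
    exact dvd_trans ⟨l, by push_cast; ring⟩ h1
  obtain ⟨y, rfl⟩ := hkx
  have hk0 : k ≠ 0 := left_ne_zero_of_mul hg0
  have hl0 : l ≠ 0 := right_ne_zero_of_mul hg0
  rw [Int.mul_ediv_cancel_left _ (by exact_mod_cast hk0),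
    Nat.mul_div_cancel_left _ (Nat.pos_of_ne_zero hg0), mul_assoc k l t,
    Nat.mul_div_cancel_left _ (Nat.pos_of_ne_zero hk0),
    Nat.mul_div_cancel_left _ (Nat.pos_of_ne_zero hk0)]
  have hlt : Nat.Coprime l t := by
    rw [mul_assoc] at hsq
    exact Nat.coprime_of_squarefree_mul (hsq.squarefree_of_dvd (dvd_mul_left _ _))
  rw [ArithmeticFunction.isMultiplicative_moebius.map_mul_of_coprime hlt]
  have hku : IsUnit (k : ZMod N) := by
    rw [ZMod.isUnit_iff_coprime]
    exact hco.coprime_dvd_left ⟨l * t, by ring⟩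
  have hk1 : χs (k : ZMod N) * χs (k : ZMod N) = 1 := by
    have : (χs * χs⁻¹) (k : ZMod N) = 1 := by
      rw [mul_inv_cancel]; exact MulChar.one_apply hku
    rw [hinv] at this
    exact this
  push_cast
  simp only [map_mul]
  linear_combination (-(k : ℂ) * ((ArithmeticFunction.moebius l : ℤ) : ℂ)
    * ((ArithmeticFunction.moebius t : ℤ) : ℂ) * χs (l : ZMod N) * χs (t : ZMod N)
    * χs (y : ZMod N)) * hk1

/-- Evaluation of `Σ_{a ∈ A_q} G(χ, a) e^{2πi x a/q}` for a quadratic character `χ` mod `q`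
induced by a primitive character `χ*` of conductor `q₀`, with `r = gcd(q, x)`. -/
theorem stmt_7 (q q₀ : ℕ) (hq : 0 < q) (hdvd : q₀ ∣ q)
    (χ : DirichletCharacter ℂ q) (χstar : DirichletCharacter ℂ q₀)
    (hprim : χstar.IsPrimitive) (hind : χ = DirichletCharacter.changeLevel hdvd χstar)
    (hquad : ∀ n : ZMod q, χ n = -1 ∨ χ n = 0 ∨ χ n = 1) (hneg : ∃ n : ZMod q, χ n = -1)
    (x : ℤ) (r : ℕ) (hr : r = Int.gcd (q : ℤ) x) :
    (Squarefree (q / q₀) ∧ Nat.Coprime (q / q₀) q₀ ∧ r ∣ q / q₀ →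
      ∑ a ∈ Aq q, gaussG q χ (a : ℤ) * Complex.exp (2 * Real.pi * Complex.I * x * a / q) =
        ((ArithmeticFunction.moebius r : ℤ) : ℂ) * (q₀ : ℂ) *
          ((r.totient : ℂ) / (q.totient : ℂ)) * χstar (((-x : ℤ) : ZMod q₀))) ∧
    (¬(Squarefree (q / q₀) ∧ Nat.Coprime (q / q₀) q₀ ∧ r ∣ q / q₀) →
      ∑ a ∈ Aq q, gaussG q χ (a : ℤ) * Complex.exp (2 * Real.pi * Complex.I * x * a / q)
        = 0) := by
  obtain ⟨m, rfl⟩ := hdvd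
  have hN : q₀ ≠ 0 := left_ne_zero_of_mul hq.ne'
  have hm : m ≠ 0 := right_ne_zero_of_mul hq.ne'
  have : NeZero q₀ := ⟨hN⟩
  have : NeZero (q₀ * m) := ⟨hq.ne'⟩
  rw [Nat.mul_div_cancel_left _ (Nat.pos_of_ne_zero hN)]
  have hχ : χ.IsQuadratic := fun a => by
    rcases hquad a with h | h | h <;> simp [h]
  have hinv : χstar⁻¹ = χstar := by
    apply DirichletCharacter.changeLevel_injective (dvd_mul_right q₀ m)
    rw [map_inv, ← hind, hχ.inv]
  set Φ : ℂ := ((q₀ * m).totient : ℂ) with hΦ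
  set T : ℂ := ∑ r ∈ Aq (q₀ * m), χ (r : ZMod (q₀ * m)) * eN (q₀ * m) (r * x) with hT
  have hG : ∀ n : ℤ, gaussG (q₀ * m) χ n
      = Φ⁻¹ * ∑ r ∈ Aq (q₀ * m), χ (r : ZMod (q₀ * m)) * eN (q₀ * m) (r * n) := by
    intro n
    unfold gaussG
    congr 1
    refine Finset.sum_congr rfl fun r _ => ?_
    unfold eN
    congr 2
    push_cast
    ring
  have hGa : ∀ a ∈ Aq (q₀ * m), gaussG (q₀ * m) χ (a : ℤ)
      = Φ⁻¹ * (tau q₀ χstar 1 * (((ArithmeticFunction.moebius m : ℤ) : ℂ) * χstar (m : ZMod q₀)))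
        * χ (a : ZMod (q₀ * m)) := by
    intro a ha
    have hca : Nat.Coprime a (q₀ * m) := (Finset.mem_filter.1 ha).2
    rw [hG, hind, formula_coprime q₀ m hN hm _ χstar hprim hinv (a : ℤ)
      (Nat.isCoprime_iff_coprime.2 (Nat.coprime_mul_iff_right.1 hca).2.symm)]
    have h5 := DirichletCharacter.changeLevel_eq_cast_of_dvd' χstar (dvd_mul_right q₀ m)
      (a := (a : ℤ)) (by exact_mod_cast Nat.isCoprime_iff_coprime.2 hca)
    rw [Int.cast_natCast, Int.cast_natCast] at h5
    rw [h5, Int.cast_natCast]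
    ring
  have hS : ∑ a ∈ Aq (q₀ * m), gaussG (q₀ * m) χ (a : ℤ)
        * Complex.exp (2 * Real.pi * Complex.I * x * a / (q₀ * m : ℕ))
      = Φ⁻¹ * (tau q₀ χstar 1 * (((ArithmeticFunction.moebius m : ℤ) : ℂ) * χstar (m : ZMod q₀)))
        * T := by
    rw [hT, Finset.mul_sum]
    refine Finset.sum_congr rfl fun a ha => ?_
    have he : Complex.exp (2 * Real.pi * Complex.I * x * a / (q₀ * m : ℕ))
        = eN (q₀ * m) (a * x) := by
      unfold eN
      congr 1
      push_cast
      ring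
    rw [hGa a ha, he]
    ring
  rw [hS]
  have hrx : (r : ℤ) ∣ x := hr ▸ Int.gcd_dvd_right ..
  have hrq : r ∣ q₀ * m := by
    have h1 : (r : ℤ) ∣ ((q₀ * m : ℕ) : ℤ) := hr ▸ Int.gcd_dvd_left ..
    exact_mod_cast h1
  constructor
  · rintro ⟨hsq, hco, hrm⟩
    have hg : r = Int.gcd m x := by
      apply Nat.dvd_antisymm
      · exact Int.dvd_gcd (by exact_mod_cast hrm) hrx
      · rw [hr]
        refine Int.dvd_gcd ?_ (Int.gcd_dvd_right ..)
        push_cast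
        exact dvd_mul_of_dvd_right (Int.gcd_dvd_left ..) _
    rw [hT, hind, formula_squarefree q₀ m hN hm _ χstar hprim hinv x hsq hco r hg]
    have h1 := tau_sq q₀ χstar hprim hinv
    have hmu : IsUnit (m : ZMod q₀) := by rwa [ZMod.isUnit_iff_coprime]
    have h2 : χstar (m : ZMod q₀) * χstar (m : ZMod q₀) = 1 := by
      have : (χstar * χstar⁻¹) (m : ZMod q₀) = 1 := by
        rw [mul_inv_cancel]; exact MulChar.one_apply hmu
      rw [hinv] at this
      exact this
    have h3 : ((ArithmeticFunction.moebius m : ℤ) : ℂ)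
        * ((ArithmeticFunction.moebius (m / r) : ℤ) : ℂ)
        = ((ArithmeticFunction.moebius r : ℤ) : ℂ) := by
      obtain ⟨t, rfl⟩ := hrm
      have hr0 : r ≠ 0 := left_ne_zero_of_mul hm
      rw [Nat.mul_div_cancel_left _ (Nat.pos_of_ne_zero hr0),
        ArithmeticFunction.isMultiplicative_moebius.map_mul_of_coprime
          (Nat.coprime_of_squarefree_mul hsq)]
      have h4 := ArithmeticFunction.moebius_sq_eq_one_of_squarefree
        (hsq.squarefree_of_dvd (dvd_mul_left t r))
      have h5 : ((ArithmeticFunction.moebius t : ℤ) : ℂ) ^ 2 = 1 := by exact_mod_cast h4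
      push_cast
      linear_combination ((ArithmeticFunction.moebius r : ℤ) : ℂ) * h5
    have h4 : χstar ((-x : ℤ) : ZMod q₀) = χstar (-1) * χstar (x : ZMod q₀) := by
      rw [← map_mul]; congr 1; push_cast; ring
    rw [h4, ← h3, div_eq_mul_inv]
    calc _ = Φ⁻¹ * (tau q₀ χstar 1 * tau q₀ χstar 1)
          * (χstar (m : ZMod q₀) * χstar (m : ZMod q₀)) * χstar (x : ZMod q₀)
          * (((ArithmeticFunction.moebius m : ℤ) : ℂ)
            * ((ArithmeticFunction.moebius (m / r) : ℤ) : ℂ)) * r.totient := by ring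
      _ = _ := by rw [h1, h2]; ring
  · intro hn
    by_cases hsq : Squarefree m
    swap
    · rw [ArithmeticFunction.moebius_eq_zero_of_not_squarefree hsq]; simp
    by_cases hco : Nat.Coprime m q₀
    swap
    · rw [MulChar.map_nonunit χstar (by rwa [ZMod.isUnit_iff_coprime])]; simp
    have hrm : ¬ r ∣ m := fun h => hn ⟨hsq, hco, h⟩
    rw [hT, hind, formula_squarefree q₀ m hN hm _ χstar hprim hinv x hsq hco _ rfl]
    have hx0 : χstar (x : ZMod q₀) = 0 := by
      rw [DirichletCharacter.apply_eq_zero_iff]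
      intro hc
      apply hrm
      have h1 : IsCoprime (r : ℤ) (q₀ : ℤ) := hc.of_isCoprime_of_dvd_left hrx
      exact (Nat.isCoprime_iff_coprime.1 h1).dvd_of_dvd_mul_left hrq
    rw [hx0]; simp
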